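/- arXiv:2510.09929 — 2 statements merged into one kernel-verified Lean document; each statement's English description precedes it below -/
import Mathlib

section
/- Let α be a locally Lipschitz class K function and h : ℝ^n → [0,∞) be continuous. Then h is a viscosity CBF with respect to α if and only if h is a viscosity solution of the HJ-PDE −min{ H_α(x, h, ∇h), 0 } = 0 on ℝ^n. -/
open Set Filter MeasureTheory Topology

noncomputable section

/-- `α : [0,∞) → [0,∞)` is a class `K` function: continuous, strictly increasing, `α 0 = 0`. -/
def IsClassK (α : ℝ → ℝ) : Prop :=
  ContinuousOn α (Set.Ici 0) ∧ StrictMonoOn α (Set.Ici 0) ∧ α 0 = 0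

/-- `α` is a locally Lipschitz class `K` function on `[0,∞)`. -/
def IsLocallyLipschitzClassK (α : ℝ → ℝ) : Prop :=
  IsClassK α ∧
    ∀ x ∈ Set.Ici (0 : ℝ), ∃ K : NNReal, ∃ s ∈ nhdsWithin x (Set.Ici (0 : ℝ)),
      LipschitzOnWith K α s

/-- `h` is a viscosity CBF with respect to `α`: for every `x` with `h x > 0` and every `C¹`
test function `φ` such that `h - φ` has a local maximum at `x`, one has
`max_{u ∈ U} ∇φ(x) · f(x,u) ≥ -α (h x)`. -/
def IsViscosityCBF {n m : ℕ} (f : (Fin n → ℝ) → (Fin m → ℝ) → Fin n → ℝ)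
    (U : Set (Fin m → ℝ)) (α : ℝ → ℝ) (h : (Fin n → ℝ) → ℝ) : Prop :=
  Continuous h ∧
    ∀ x : Fin n → ℝ, 0 < h x →
      ∀ φ : (Fin n → ℝ) → ℝ, ContDiff ℝ 1 φ →
        IsLocalMax (fun y => h y - φ y) x →
        -α (h x) ≤ sSup ((fun u => fderiv ℝ φ x (f x u)) '' U)

/-!
Subtracting a test function from a nonnegative `h` and maximising at a zero of `h` minimises the
test function there, so its derivative vanishes. As `H_α(x, 0, 0) = α 0 = 0`, the PDE inequality
holds at such points for free, which is why it may be tested on `{h > 0}` only. Truncating by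
`min {·, 0}` leaves the sub-solution inequality unchanged and makes the super-solution inequality
void.
-/

section ViscositySolution

variable {E : Type*} [NormedAddCommGroup E] [NormedSpace ℝ E]
  {F H : E → ℝ → StrongDual ℝ E → ℝ} {s t : Set E} {h : E → ℝ}

/-- Viscosity sub-solutions of `F(x, h, Dh) = 0` on `s`. Test functions are defined on the whole
space, only the points of contact are restricted to `s`; continuity of `h` is not included. -/
def IsViscositySubsolutionOn (F : E → ℝ → StrongDual ℝ E → ℝ) (s : Set E) (h : E → ℝ) : Prop :=
  ∀ φ : E → ℝ, ContDiff ℝ 1 φ → ∀ x ∈ s, IsLocalMax (fun y => h y - φ y) x →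
    F x (h x) (fderiv ℝ φ x) ≤ 0

/-- Viscosity super-solutions of `F(x, h, Dh) = 0` on `s`, with the same conventions as
`IsViscositySubsolutionOn`. -/
def IsViscositySupersolutionOn (F : E → ℝ → StrongDual ℝ E → ℝ) (s : Set E) (h : E → ℝ) : Prop :=
  ∀ φ : E → ℝ, ContDiff ℝ 1 φ → ∀ x ∈ s, IsLocalMin (fun y => h y - φ y) x →
    0 ≤ F x (h x) (fderiv ℝ φ x)

/-- Viscosity solutions of `F(x, h, Dh) = 0` on `s`, with the same conventions as
`IsViscositySubsolutionOn`. -/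
def IsViscositySolutionOn (F : E → ℝ → StrongDual ℝ E → ℝ) (s : Set E) (h : E → ℝ) : Prop :=
  IsViscositySubsolutionOn F s h ∧ IsViscositySupersolutionOn F s h

theorem isViscositySubsolutionOn_union :
    IsViscositySubsolutionOn F (s ∪ t) h ↔
      IsViscositySubsolutionOn F s h ∧ IsViscositySubsolutionOn F t h := by
  simp only [IsViscositySubsolutionOn, mem_union, or_imp, forall_and]

theorem isViscositySubsolutionOn_neg_min_zero_iff :
    IsViscositySubsolutionOn (fun x r p => -min (H x r p) 0) s h ↔
      IsViscositySubsolutionOn (fun x r p => -H x r p) s h := by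
  simp only [IsViscositySubsolutionOn, neg_nonpos, le_min_iff, le_refl, and_true]

theorem isViscositySupersolutionOn_neg_min_zero :
    IsViscositySupersolutionOn (fun x r p => -min (H x r p) 0) s h :=
  fun _ _ _ _ _ => neg_nonneg.mpr (min_le_right _ _)

theorem isViscositySolutionOn_neg_min_zero_iff :
    IsViscositySolutionOn (fun x r p => -min (H x r p) 0) s h ↔
      IsViscositySubsolutionOn (fun x r p => -H x r p) s h :=
  (and_iff_left isViscositySupersolutionOn_neg_min_zero).trans
    isViscositySubsolutionOn_neg_min_zero_iff

theorem fderiv_eq_zero_of_isLocalMin_of_isLocalMax_sub {φ : E → ℝ} {x : E}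
    (hmin : IsLocalMin h x) (hmax : IsLocalMax (fun y => h y - φ y) x) :
    fderiv ℝ φ x = 0 := by
  have hφ : IsLocalMin φ x := by simpa only [sub_sub_cancel] using hmin.sub hmax
  exact hφ.fderiv_eq_zero

theorem isViscositySubsolutionOn_setOf_eq_zero (hF : ∀ x, F x 0 0 ≤ 0) (hh0 : ∀ x, 0 ≤ h x) :
    IsViscositySubsolutionOn F {x | h x = 0} h := by
  intro φ _ x (hx : h x = 0) hmax
  have hmin : IsLocalMin h x := .of_forall fun y => hx.trans_le (hh0 y)
  rw [fderiv_eq_zero_of_isLocalMin_of_isLocalMax_sub hmin hmax, hx]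
  exact hF x

theorem isViscositySubsolutionOn_univ_iff_setOf_pos (hF : ∀ x, F x 0 0 ≤ 0)
    (hh0 : ∀ x, 0 ≤ h x) :
    IsViscositySubsolutionOn F univ h ↔ IsViscositySubsolutionOn F {x | 0 < h x} h := by
  have hcover : univ = {x | 0 < h x} ∪ {x | h x = 0} :=
    (eq_univ_of_forall fun x => (hh0 x).lt_or_eq').symm
  rw [hcover, isViscositySubsolutionOn_union]
  exact and_iff_left (isViscositySubsolutionOn_setOf_eq_zero hF hh0)

theorem isViscosityCBF_iff_viscosity_solution_general (hH : ∀ x, 0 ≤ H x 0 0)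
    (hh0 : ∀ x, 0 ≤ h x) :
    IsViscositySubsolutionOn (fun x r p => -H x r p) {x | 0 < h x} h ↔
      IsViscositySolutionOn (fun x r p => -min (H x r p) 0) univ h := by
  rw [isViscositySolutionOn_neg_min_zero_iff,
    isViscositySubsolutionOn_univ_iff_setOf_pos (fun x => neg_nonpos.mpr (hH x)) hh0]

end ViscositySolution

section ControlBarrier

/-- The Hamiltonian `H_α(x, r, p) = max_{u ∈ U} p · f(x, u) + α r`, with the covector `p` as a
continuous linear functional. The maximum is encoded as `sSup`, which is `0` when `U = ∅` or the
values are unbounded above. -/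
def hamiltonian {E V : Type*} [NormedAddCommGroup E] [NormedSpace ℝ E] (f : E → V → E)
    (U : Set V) (α : ℝ → ℝ) (x : E) (r : ℝ) (p : StrongDual ℝ E) : ℝ :=
  sSup ((fun u => p (f x u)) '' U) + α r

theorem hamiltonian_zero_right {E V : Type*} [NormedAddCommGroup E] [NormedSpace ℝ E]
    (f : E → V → E) (U : Set V) (α : ℝ → ℝ) (x : E) (r : ℝ) :
    hamiltonian f U α x r 0 = α r := by
  simp [hamiltonian, sSup_image']

theorem isViscosityCBF_iff_isViscositySubsolutionOn {n m : ℕ}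
    {f : (Fin n → ℝ) → (Fin m → ℝ) → Fin n → ℝ} {U : Set (Fin m → ℝ)} {α : ℝ → ℝ}
    {h : (Fin n → ℝ) → ℝ} (hh : Continuous h) :
    IsViscosityCBF f U α h ↔
      IsViscositySubsolutionOn (fun x r p => -hamiltonian f U α x r p) {x | 0 < h x} h := by
  simp only [IsViscosityCBF, hh, true_and, IsViscositySubsolutionOn, hamiltonian, mem_ofPred_eq,
    neg_nonpos, ← neg_le_iff_add_nonneg]
  exact ⟨fun hC φ hφ x hx => hC x hx φ hφ, fun hS x hx φ hφ => hS φ hφ x hx⟩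

end ControlBarrier

/-- A continuous nonnegative `h` is a viscosity CBF w.r.t. `α` iff it is a
viscosity solution on `ℝⁿ` of the HJ-PDE `-min { H_α(x, h, ∇h), 0 } = 0`. -/
theorem isViscosityCBF_iff_viscosity_solution {n m : ℕ}
    (f : (Fin n → ℝ) → (Fin m → ℝ) → Fin n → ℝ) (U : Set (Fin m → ℝ))
    (hU : IsCompact U)
    (hf : ∃ K : NNReal, LipschitzOnWith K (Function.uncurry f) (Set.univ ×ˢ U))
    (α : ℝ → ℝ) (hα : IsLocallyLipschitzClassK α)
    (h : (Fin n → ℝ) → ℝ) (hh : Continuous h) (hh0 : ∀ x, 0 ≤ h x) :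
    IsViscosityCBF f U α h ↔
      ((∀ φ : (Fin n → ℝ) → ℝ, ContDiff ℝ 1 φ →
        ∀ x₀ : Fin n → ℝ, IsLocalMax (fun y => h y - φ y) x₀ →
          -min (sSup ((fun u => fderiv ℝ φ x₀ (f x₀ u)) '' U) + α (h x₀)) 0 ≤ 0) ∧
       (∀ φ : (Fin n → ℝ) → ℝ, ContDiff ℝ 1 φ →
        ∀ x₀ : Fin n → ℝ, IsLocalMin (fun y => h y - φ y) x₀ →
          0 ≤ -min (sSup ((fun u => fderiv ℝ φ x₀ (f x₀ u)) '' U) + α (h x₀)) 0)) := by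
  have hα0 (x) : 0 ≤ hamiltonian f U α x 0 0 := by rw [hamiltonian_zero_right, hα.1.2.2]
  simpa only [IsViscositySolutionOn, IsViscositySubsolutionOn, IsViscositySupersolutionOn,
    hamiltonian, mem_univ, forall_const] using
    (isViscosityCBF_iff_isViscositySubsolutionOn hh).trans
      (isViscosityCBF_iff_viscosity_solution_general hα0 hh0)
end
end

section
/- Let α be a locally Lipschitz class K function and h : ℝ^n → [0,∞) be continuous. Then h is a viscosity CBF with respect to α if and only if the CB-VF corresponding to h and α is time-invariant, that is, if and only if for every x ∈ ℝ^n and every T ≥ 0, β_α(h(x), T) = sup over pairs (u, ξ) of control signals u ∈ 𝕌 and admissible trajectories ξ from x under u of min_{t ∈ [0,T]} β_α(h(ξ(t)), T − t). -/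
open Set Filter MeasureTheory Topology

noncomputable section

/-- `β` is the function `β_α`: for each `r ≥ 0`, `t ↦ β r t` solves `y' = -α y`, `y 0 = r`,
staying in `[0, r]` for all `t ≥ 0`. -/
def IsBetaFor (α : ℝ → ℝ) (β : ℝ → ℝ → ℝ) : Prop :=
  ∀ r : ℝ, 0 ≤ r →
    β r 0 = r ∧ ∀ t : ℝ, 0 ≤ t →
      0 ≤ β r t ∧ β r t ≤ r ∧ HasDerivWithinAt (β r) (-α (β r t)) (Set.Ici 0) t

/-- `u` is an admissible control signal: measurable, valued in `U` on `[0,∞)`. -/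
def IsControl {m : ℕ} (U : Set (Fin m → ℝ)) (u : ℝ → Fin m → ℝ) : Prop :=
  Measurable u ∧ ∀ t : ℝ, 0 ≤ t → u t ∈ U

/-- `ξ` is an admissible trajectory from `x` under the control signal `u`. -/
def IsTrajectory {n m : ℕ} (f : (Fin n → ℝ) → (Fin m → ℝ) → Fin n → ℝ)
    (x : Fin n → ℝ) (u : ℝ → Fin m → ℝ) (ξ : ℝ → Fin n → ℝ) : Prop :=
  Continuous ξ ∧ ∀ t : ℝ, 0 ≤ t → ξ t = x + ∫ s in (0 : ℝ)..t, f (ξ s) (u s)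

/-- The anti-discounted payoff defining the CB-VF: the supremum over control signals `u`
and admissible trajectories `ξ` from `x` of `min_{t ∈ [0,T]} β_α (g (ξ t)) (T - t)`. -/
def cbvfPayoff {n m : ℕ} (f : (Fin n → ℝ) → (Fin m → ℝ) → Fin n → ℝ)
    (U : Set (Fin m → ℝ)) (β : ℝ → ℝ → ℝ) (g : (Fin n → ℝ) → ℝ)
    (x : Fin n → ℝ) (T : ℝ) : ℝ :=
  sSup {y : ℝ | ∃ u ξ, IsControl U u ∧ IsTrajectory f x u ξ ∧
    y = sInf ((fun t => β (g (ξ t)) (T - t)) '' Set.Icc 0 T)}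

/-!
Only the implication from the viscosity inequality to time-invariance needs a construction. A
viscosity subsolution has no gradient at most points, so `h` is replaced by its sup-convolution `V`
over a neighbourhood of the reachable set. At each `y` a maximiser `p` of `h z - c |z - y|²` is a
point where the quadratic penalty is an admissible test function, which yields a control that moves
`y` so that `V` decreases to first order no faster than the flow of `y' = -α y`. The error of a
single step is `o(t)` uniformly in `y`, so a feedback sampled on a fine grid and held constant
between samples keeps `h` above `β (h x) t - e`; monotonicity of `α` prevents `β` from amplifying
the errors. Propagating this bound to the final time by the semigroup property of `β` gives
time-invariance. Conversely, one differentiates along nearly optimal trajectories at `T → 0`.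
-/

lemma exists_eq_nat_mul_add {τ t : ℝ} (hτ : 0 < τ) (ht : 0 ≤ t) :
    ∃ i : ℕ, ∃ s ∈ Ico 0 τ, t = i * τ + s := by
  refine ⟨⌊t / τ⌋₊, t - ⌊t / τ⌋₊ * τ, ⟨?_, ?_⟩, by ring⟩
  · linarith [(le_div_iff₀ hτ).1 (Nat.floor_le (div_nonneg ht hτ.le))]
  · linarith [(div_lt_iff₀ hτ).1 (Nat.lt_floor_add_one (t / τ))]

lemma exists_mem_Ioc_mul_lt_one (K : NNReal) {τ₀ : ℝ} (hτ₀ : 0 < τ₀) :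
    ∃ τ ∈ Ioc 0 τ₀, K * τ < 1 := by
  refine ⟨min τ₀ (1 / (K + 1)), ⟨lt_min hτ₀ (by positivity), min_le_left _ _⟩, ?_⟩
  calc K * min τ₀ (1 / (K + 1)) ≤ K * (1 / (K + 1)) := by gcongr; exact min_le_right _ _
    _ < 1 := by rw [mul_one_div, div_lt_one (by positivity)]; exact lt_add_one _

section ScalarFlow

variable {α : ℝ → ℝ}

lemma le_add_of_hasDerivWithinAt_neg_comp {s : Set ℝ} (hα : MonotoneOn α s) {y z : ℝ → ℝ}
    (hys : ∀ t, 0 ≤ t → y t ∈ s) (hzs : ∀ t, 0 ≤ t → z t ∈ s)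
    (hy : ∀ t, 0 ≤ t → HasDerivWithinAt y (-α (y t)) (Ici 0) t)
    (hz : ∀ t, 0 ≤ t → HasDerivWithinAt z (-α (z t)) (Ici 0) t)
    {e : ℝ} (he : 0 ≤ e) (h0 : y 0 ≤ z 0 + e) {t : ℝ} (ht : 0 ≤ t) : y t ≤ z t + e := by
  have below : ∀ δ > 0, y t ≤ z t + e + δ * t := fun δ hδ => by
    refine image_le_of_deriv_right_lt_deriv_boundary' (a := 0) (b := t)
      (f' := fun r => -α (y r)) (B := fun r => z r + e + δ * r) (B' := fun r => -α (z r) + δ)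
      (fun r hr => (hy r hr.1).continuousWithinAt.mono Icc_subset_Ici_self)
      (fun r hr => (hy r hr.1).mono (Ici_subset_Ici.2 hr.1)) (by simpa using h0)
      (fun r hr => ?_) (fun r hr => ?_) (fun r hr hyz => ?_) ⟨ht, le_rfl⟩
    · exact (((hz r hr.1).continuousWithinAt.add_const e).add
        (by fun_prop)).mono Icc_subset_Ici_self
    · have hlin : HasDerivWithinAt (fun r => δ * r) δ (Ici 0) r := by
        simpa using (hasDerivWithinAt_id r (Ici 0)).const_mul δ
      exact (((hz r hr.1).add_const e).add hlin).mono (Ici_subset_Ici.2 hr.1)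
    · have hzy : z r ≤ y r := by nlinarith [mul_nonneg hδ.le hr.1]
      linarith [hα (hzs r hr.1) (hys r hr.1) hzy]
  have limit : Tendsto (fun δ => z t + e + δ * t) (𝓝[>] 0) (𝓝 (z t + e)) :=
    (Continuous.tendsto' (by fun_prop) 0 _ (by simp)).mono_left nhdsWithin_le_nhds
  exact ge_of_tendsto limit (eventually_mem_nhdsWithin.mono below)

namespace IsBetaFor

variable {β : ℝ → ℝ → ℝ} {r s t : ℝ}

lemma apply_zero (hβ : IsBetaFor α β) (hr : 0 ≤ r) : β r 0 = r := (hβ r hr).1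

lemma nonneg (hβ : IsBetaFor α β) (hr : 0 ≤ r) (ht : 0 ≤ t) : 0 ≤ β r t := ((hβ r hr).2 t ht).1

lemma le_self (hβ : IsBetaFor α β) (hr : 0 ≤ r) (ht : 0 ≤ t) : β r t ≤ r := ((hβ r hr).2 t ht).2.1

lemma hasDerivWithinAt (hβ : IsBetaFor α β) (hr : 0 ≤ r) (ht : 0 ≤ t) :
    HasDerivWithinAt (β r) (-α (β r t)) (Ici 0) t :=
  ((hβ r hr).2 t ht).2.2

lemma continuousOn (hβ : IsBetaFor α β) (hr : 0 ≤ r) : ContinuousOn (β r) (Ici 0) :=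
  fun _ ht => (hβ.hasDerivWithinAt hr ht).continuousWithinAt

lemma zero_apply (hβ : IsBetaFor α β) (ht : 0 ≤ t) : β 0 t = 0 :=
  le_antisymm (hβ.le_self le_rfl ht) (hβ.nonneg le_rfl ht)

lemma tendsto_sub_div (hβ : IsBetaFor α β) (hr : 0 ≤ r) :
    Tendsto (fun t => (β r t - r) / t) (𝓝[>] 0) (𝓝 (-α r)) := by
  have := (hβ.hasDerivWithinAt hr le_rfl).mono Ioi_subset_Ici_self
  rw [hasDerivWithinAt_iff_tendsto_slope' self_notMem_Ioi] at this
  simpa only [slope_fun_def_field, hβ.apply_zero hr, sub_zero] using this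

lemma le_add (hβ : IsBetaFor α β) (hα : MonotoneOn α (Ici 0)) (hs : 0 ≤ s) (hr : 0 ≤ r) {e : ℝ}
    (he : 0 ≤ e) (hsr : s ≤ r + e) (ht : 0 ≤ t) : β s t ≤ β r t + e :=
  le_add_of_hasDerivWithinAt_neg_comp hα (fun _ => hβ.nonneg hs) (fun _ => hβ.nonneg hr)
    (fun _ => hβ.hasDerivWithinAt hs) (fun _ => hβ.hasDerivWithinAt hr) he
    (by rwa [hβ.apply_zero hs, hβ.apply_zero hr]) ht

lemma hasDerivWithinAt_add (hβ : IsBetaFor α β) (hr : 0 ≤ r) (hs : 0 ≤ s) (ht : 0 ≤ t) :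
    HasDerivWithinAt (fun t => β r (s + t)) (-α (β r (s + t))) (Ici 0) t := by
  have outer := hβ.hasDerivWithinAt hr (add_nonneg hs ht)
  have inner := (hasDerivWithinAt_id t (Ici 0)).const_add s
  have composed := HasDerivWithinAt.comp t outer inner fun _ ha => add_nonneg hs ha
  rwa [mul_one] at composed

lemma apply_apply (hβ : IsBetaFor α β) (hα : MonotoneOn α (Ici 0)) (hr : 0 ≤ r)
    (hs : 0 ≤ s) (ht : 0 ≤ t) : β (β r s) t = β r (s + t) := by
  have hrs := hβ.nonneg hr hs
  have hstart : β (β r s) 0 = β r (s + 0) := by rw [hβ.apply_zero hrs, add_zero]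
  have restarted : ∀ t, 0 ≤ t → β (β r s) t ∈ Ici 0 := fun _ => hβ.nonneg hrs
  have continued : ∀ t, 0 ≤ t → β r (s + t) ∈ Ici 0 := fun _ ht => hβ.nonneg hr (add_nonneg hs ht)
  refine le_antisymm ?_ ?_
  · simpa using le_add_of_hasDerivWithinAt_neg_comp hα restarted continued
      (fun _ => hβ.hasDerivWithinAt hrs) (fun _ => hβ.hasDerivWithinAt_add hr hs) le_rfl
      (by simp [hstart]) ht
  · simpa using le_add_of_hasDerivWithinAt_neg_comp hα continued restarted
      (fun _ => hβ.hasDerivWithinAt_add hr hs) (fun _ => hβ.hasDerivWithinAt hrs) le_rfl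
      (by simp [hstart]) ht

lemma exists_eq_sub_mul (hβ : IsBetaFor α β) (hr : 0 ≤ r) (ht : 0 ≤ t) :
    ∃ c ∈ Icc 0 t, β r t = r - t * α (β r c) := by
  rcases ht.eq_or_lt with rfl | htpos
  · exact ⟨0, by simp, by simp [hβ.apply_zero hr]⟩
  obtain ⟨c, hc, hslope⟩ := exists_hasDerivAt_eq_slope (β r) (fun c => -α (β r c)) htpos
    ((hβ.continuousOn hr).mono Icc_subset_Ici_self)
    (fun c hc => (hβ.hasDerivWithinAt hr hc.1.le).hasDerivAt (Ici_mem_nhds hc.1))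
  refine ⟨c, Ioo_subset_Icc_self hc, ?_⟩
  rw [hβ.apply_zero hr, sub_zero, eq_div_iff htpos.ne'] at hslope
  linarith

lemma sub_mul_le (hβ : IsBetaFor α β) (hα : MonotoneOn α (Ici 0)) (hr : 0 ≤ r) (ht : 0 ≤ t) :
    r - t * α r ≤ β r t := by
  obtain ⟨c, hc, heq⟩ := hβ.exists_eq_sub_mul hr ht
  have : t * α (β r c) ≤ t * α r :=
    mul_le_mul_of_nonneg_left (hα (hβ.nonneg hr hc.1) hr (hβ.le_self hr hc.1)) ht
  linarith

lemma exists_forall_le_sub_mul (hβ : IsBetaFor α β) (hαc : ContinuousOn α (Ici 0))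
    (hα : MonotoneOn α (Ici 0)) {M ε : ℝ} (hM : 0 ≤ M) (hε : 0 < ε) :
    ∃ τ > 0, ∀ r ∈ Icc 0 M, ∀ s ∈ Icc 0 M, s ≤ r + τ →
      ∀ t ∈ Icc 0 τ, β r t ≤ r - t * (α s - ε) := by
  have hαM : ContinuousOn α (Icc 0 M) := hαc.mono Icc_subset_Ici_self
  obtain ⟨δ, hδ, hunif⟩ := Metric.uniformContinuousOn_iff.1
    (isCompact_Icc.uniformContinuousOn_of_continuous hαM) ε hε
  set τ := δ / (|α M| + 2)
  have hτ : 0 < τ := by positivity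
  have hτδ : τ + τ * |α M| < δ := by
    have : τ * (|α M| + 2) = δ := div_mul_cancel₀ _ (by positivity)
    linarith
  refine ⟨τ, hτ, fun r hr s hs hsr t ht => ?_⟩
  obtain ⟨c, hc, heq⟩ := hβ.exists_eq_sub_mul hr.1 ht.1
  have hcM : β r c ∈ Icc 0 M := ⟨hβ.nonneg hr.1 hc.1, (hβ.le_self hr.1 hc.1).trans hr.2⟩
  have hdrop : c * α r ≤ τ * |α M| := calc
    c * α r ≤ c * |α M| :=
      mul_le_mul_of_nonneg_left ((hα hr.1 hM hr.2).trans (le_abs_self _)) hc.1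
    _ ≤ τ * |α M| := by gcongr; exact hc.2.trans ht.2
  have hαs : α s ≤ α (β r c) + ε := by
    rcases le_total s (β r c) with hle | hle
    · linarith [hα hs.1 hcM.1 hle]
    · have hdist : dist s (β r c) < δ := by
        rw [Real.dist_eq, abs_of_nonneg (sub_nonneg.2 hle)]
        linarith [hβ.sub_mul_le hα hr.1 hc.1]
      linarith [(abs_lt.1 (hunif s hs _ hcM hdist)).2]
  rw [heq]
  linarith [mul_le_mul_of_nonneg_left hαs ht.1]

lemma sub_mul_le_of_forall_grid (hβ : IsBetaFor α β) (hα : MonotoneOn α (Ici 0))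
    {W : ℝ → ℝ} {τ e T : ℝ} (hτ : 0 < τ) (he : 0 ≤ e) (hW : ∀ t ∈ Icc 0 T, 0 ≤ W t)
    (hgrid : ∀ i : ℕ, ∀ t ∈ Icc 0 τ, i * τ + t ≤ T → β (W (i * τ)) t - e * t ≤ W (i * τ + t))
    (ht : t ∈ Icc 0 T) : β (W 0) t - e * t ≤ W t := by
  have hW0 : 0 ≤ W 0 := hW 0 ⟨le_rfl, ht.1.trans ht.2⟩
  have extend : ∀ i : ℕ, ∀ s ∈ Icc 0 τ, i * τ + s ≤ T →
      β (W 0) (i * τ) - e * (i * τ) ≤ W (i * τ) →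
      β (W 0) (i * τ + s) - e * (i * τ + s) ≤ W (i * τ + s) := fun i s hs hsT hi => by
    have hiτ : 0 ≤ i * τ := by positivity
    have := hβ.le_add hα (hβ.nonneg hW0 hiτ) (hW (i * τ) ⟨hiτ, by linarith [hs.1]⟩)
      (mul_nonneg he hiτ) (by linarith) hs.1
    rw [hβ.apply_apply hα hW0 hiτ hs.1] at this
    linarith [hgrid i s hs hsT]
  have nodes : ∀ i : ℕ, i * τ ≤ T → β (W 0) (i * τ) - e * (i * τ) ≤ W (i * τ) := fun i => by
    induction i with
    | zero => intro; simp [hβ.apply_zero hW0]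
    | succ i ih =>
      intro hi
      have hsucc : ((i + 1 : ℕ) : ℝ) * τ = i * τ + τ := by push_cast; ring
      rw [hsucc] at hi ⊢
      exact extend i τ ⟨hτ.le, le_rfl⟩ hi (ih (by linarith))
  obtain ⟨i, s, hs, rfl⟩ := exists_eq_nat_mul_add hτ ht.1
  exact extend i s (Ico_subset_Icc_self hs) ht.2 (nodes i (by linarith [hs.1, ht.2]))

end IsBetaFor

end ScalarFlow

section IntegralCurve

variable {E : Type*} [NormedAddCommGroup E]

lemma exists_isPicardLindelof_of_lipschitzWith {g : E → E} {K : NNReal} (hg : LipschitzWith K g)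
    {τ : ℝ} (hτ : 0 ≤ τ) (hKτ : K * τ < 1) (z : E) :
    ∃ a L, IsPicardLindelof (fun _ => g) (⟨0, left_mem_Icc.2 hτ⟩ : Icc 0 τ) z a 0 L K := by
  lift τ to NNReal using hτ
  have hgap : 0 < 1 - K * (τ : ℝ) := sub_pos.2 hKτ
  obtain ⟨L, hL⟩ : ∃ L : NNReal, (L : ℝ) = ‖g z‖ + K * (L * τ) := by
    refine ⟨Real.toNNReal (‖g z‖ / (1 - K * τ)), ?_⟩
    rw [Real.coe_toNNReal _ (by positivity)]
    field_simp
    ring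
  refine ⟨L * τ, L, .of_time_independent (fun y hy => ?_) hg.lipschitzOnWith (by simp)⟩
  have hyz : ‖y - z‖ ≤ L * τ := by simpa [dist_eq_norm] using hy
  calc ‖g y‖ ≤ ‖g z‖ + ‖g y - g z‖ := norm_le_norm_add_norm_sub' _ _
    _ ≤ ‖g z‖ + K * ‖y - z‖ := by gcongr; exact hg.norm_sub_le y z
    _ ≤ ‖g z‖ + K * (L * τ) := by gcongr
    _ = L := hL.symm

variable [NormedSpace ℝ E]

lemma norm_sub_le_gronwallBound {ξ v : ℝ → E} {x : E} {F K : ℝ} (hK : 0 ≤ K) (hξ : Continuous ξ)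
    (hint : ∀ t, 0 ≤ t → ξ t = x + ∫ s in (0 : ℝ)..t, v s)
    (hv : ∀ t, 0 ≤ t → ‖v t‖ ≤ F + K * ‖ξ t - x‖) {t : ℝ} (ht : 0 ≤ t) :
    ‖ξ t - x‖ ≤ gronwallBound 0 K F t := by
  set speed : ℝ → ℝ := fun s => F + K * ‖ξ s - x‖
  have hspeed : Continuous speed := by fun_prop
  have hderiv : ∀ t, HasDerivAt (fun t => ∫ s in (0 : ℝ)..t, speed s) (speed t) t := fun t =>
    intervalIntegral.integral_hasDerivAt_right (hspeed.intervalIntegrable _ _)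
      (hspeed.stronglyMeasurableAtFilter _ _) hspeed.continuousAt
  have hdist : ∀ t, 0 ≤ t → ‖ξ t - x‖ ≤ ‖∫ s in (0 : ℝ)..t, speed s‖ := fun t ht => by
    rw [hint t ht, add_sub_cancel_left]
    exact (intervalIntegral.norm_integral_le_of_norm_le ht
      (ae_of_all _ fun s hs => hv s hs.1.le) (hspeed.intervalIntegrable _ _)).trans (le_abs_self _)
  have hbound := norm_le_gronwallBound_of_norm_deriv_right_le (δ := 0) (K := K) (ε := F)
    (fun s _ => (hderiv s).continuousAt.continuousWithinAt)
    (fun s _ => (hderiv s).hasDerivWithinAt) (by simp) (fun s hs => ?_) t ⟨ht, le_rfl⟩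
  · simpa using (hdist t ht).trans hbound
  · rw [Real.norm_of_nonneg ((norm_nonneg _).trans (hv s hs.1))]
    linarith [mul_le_mul_of_nonneg_left (hdist s hs.1) hK]

lemma exists_integralCurve_of_lipschitzWith [CompleteSpace E] {g : E → E} {K : NNReal}
    (hg : LipschitzWith K g) {τ : ℝ} (hτ : 0 ≤ τ) (hKτ : K * τ < 1) (z : E) :
    ∃ η : ℝ → E, Continuous η ∧ ∀ t ∈ Icc 0 τ, η t = z + ∫ s in (0 : ℝ)..t, g (η s) := by
  obtain ⟨a, L, hpl⟩ := exists_isPicardLindelof_of_lipschitzWith hg hτ hKτ z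
  obtain ⟨η, h0 : η 0 = z, hη⟩ := hpl.exists_eq_forall_mem_Icc_hasDerivWithinAt₀
  have hηc : ContinuousOn η (Icc 0 τ) := fun t ht => (hη t ht).continuousWithinAt
  set ηext : ℝ → E := IccExtend hτ ((Icc 0 τ).domRestrict η)
  have hext : Continuous ηext := hηc.domRestrict.Icc_extend'
  have heq : ∀ t ∈ Icc 0 τ, ηext t = η t := fun t ht => IccExtend_of_mem hτ _ ht
  refine ⟨ηext, hext, fun t ht => ?_⟩
  have hsub : Icc 0 t ⊆ Icc 0 τ := Icc_subset_Icc_right ht.2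
  have hderiv : ∀ s ∈ Ioo 0 t, HasDerivAt η (g (ηext s)) s := fun s hs => by
    have hsτ : s ∈ Icc 0 τ := hsub (Ioo_subset_Icc_self hs)
    rw [heq s hsτ]
    exact (hη s hsτ).hasDerivAt (Icc_mem_nhds hs.1 (hs.2.trans_le ht.2))
  rw [intervalIntegral.integral_eq_sub_of_hasDerivAt_of_le ht.1 (hηc.mono hsub) hderiv
    ((hg.continuous.comp hext).intervalIntegrable _ _), heq t ht, h0, add_sub_cancel]

end IntegralCurve

section GridGlue

/-- The concatenation of the curves `c 0, c 1, …`, each run for a time `τ` on its own clock. For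
`t < 0` it is `c 0 t`, because `⌊·⌋₊` vanishes on negative numbers. -/
def gridGlue {E : Type*} (τ : ℝ) (c : ℕ → ℝ → E) (t : ℝ) : E := c ⌊t / τ⌋₊ (t - ⌊t / τ⌋₊ * τ)

section Value

variable {E : Type*} {τ s t : ℝ} {c : ℕ → ℝ → E}

lemma gridGlue_nat_mul_add (hτ : 0 < τ) (i : ℕ) (hs : s ∈ Ico 0 τ) :
    gridGlue τ c (i * τ + s) = c i s := by
  have hfloor : ⌊(i * τ + s) / τ⌋₊ = i := by
    rw [Nat.floor_eq_iff (by have := hs.1; positivity), le_div_iff₀ hτ, div_lt_iff₀ hτ]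
    constructor <;> linarith [hs.1, hs.2]
  simp only [gridGlue, hfloor, add_sub_cancel_left]

lemma gridGlue_nat_mul (hτ : 0 < τ) (i : ℕ) : gridGlue τ c (i * τ) = c i 0 := by
  simpa using gridGlue_nat_mul_add (c := c) hτ i ⟨le_rfl, hτ⟩

lemma gridGlue_nat_mul_add_of_le (hτ : 0 < τ) (hc : ∀ i, c i τ = c (i + 1) 0) (i : ℕ)
    (hs : s ∈ Icc 0 τ) : gridGlue τ c (i * τ + s) = c i s := by
  rcases hs.2.eq_or_lt with rfl | hlt
  · rw [hc, ← gridGlue_nat_mul (c := c) hτ (i + 1)]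
    push_cast
    ring_nf
  · exact gridGlue_nat_mul_add hτ i ⟨hs.1, hlt⟩

lemma gridGlue_of_nonpos (hτ : 0 < τ) (ht : t ≤ 0) : gridGlue τ c t = c 0 t := by
  simp [gridGlue, Nat.floor_of_nonpos (div_nonpos_of_nonpos_of_nonneg ht hτ.le)]

lemma gridGlue_eqOn_Ioo (hτ : 0 < τ) (i : ℕ) (hs : s ≤ τ) :
    EqOn (fun t => c i (t - i * τ)) (gridGlue τ c) (Ioo (i * τ) (i * τ + s)) := fun t ht => by
  have hts : t - i * τ ∈ Ico 0 τ := ⟨by linarith [ht.1], by linarith [ht.2]⟩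
  simp only [← gridGlue_nat_mul_add (c := c) hτ i hts, add_sub_cancel]

lemma continuous_gridGlue [TopologicalSpace E] (hτ : 0 < τ) (hcc : ∀ i, Continuous (c i))
    (hc : ∀ i, c i τ = c (i + 1) 0) : Continuous (gridGlue τ c) := by
  have hpiece : ∀ i : ℕ, ContinuousOn (gridGlue τ c) (Icc (i * τ) (i * τ + τ)) := fun i => by
    have hshift : Continuous fun t => c i (t - i * τ) := by have := hcc i; fun_prop
    refine hshift.continuousOn.congr fun t ht => ?_
    have hts : t - i * τ ∈ Icc 0 τ := ⟨by linarith [ht.1], by linarith [ht.2]⟩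
    simp only [← gridGlue_nat_mul_add_of_le hτ hc i hts, add_sub_cancel]
  have hIic : ∀ i : ℕ, ContinuousOn (gridGlue τ c) (Iic (i * τ)) := fun i => by
    induction i with
    | zero =>
      exact (hcc 0).continuousOn.congr fun t ht => gridGlue_of_nonpos hτ (by simpa using ht)
    | succ i ih =>
      have hsucc : ((i + 1 : ℕ) : ℝ) * τ = i * τ + τ := by push_cast; ring
      rw [hsucc, ← Iic_union_Icc_eq_Iic (le_add_of_nonneg_right hτ.le)]
      exact ih.union_of_isClosed (hpiece i) isClosed_Iic isClosed_Icc
  refine continuous_iff_continuousAt.2 fun t => ?_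
  obtain ⟨i, hi⟩ := exists_nat_gt (t / τ)
  exact (hIic i).continuousAt (Iic_mem_nhds ((div_lt_iff₀ hτ).1 hi))

end Value

section Integral

variable {E : Type*} [NormedAddCommGroup E] {τ s t : ℝ} {c v : ℕ → ℝ → E}

lemma intervalIntegrable_gridGlue (hτ : 0 < τ) (hv : ∀ i, Continuous (v i)) (i : ℕ)
    (hs : s ∈ Icc 0 τ) : IntervalIntegrable (gridGlue τ v) volume (i * τ) (i * τ + s) := by
  have hcont : Continuous fun t => v i (t - i * τ) := by have := hv i; fun_prop
  refine (hcont.intervalIntegrable _ _).congr_uIoo ?_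
  rw [uIoo_of_le (le_add_of_nonneg_right hs.1)]
  exact gridGlue_eqOn_Ioo hτ i hs.2

variable [NormedSpace ℝ E]

lemma integral_gridGlue_piece (hτ : 0 < τ) (i : ℕ) (hs : s ∈ Icc 0 τ) :
    ∫ t in (i * τ)..(i * τ + s), gridGlue τ v t = ∫ t in (0 : ℝ)..s, v i t := by
  rw [← intervalIntegral.integral_congr_Ioo_of_le (le_add_of_nonneg_right hs.1)
    (gridGlue_eqOn_Ioo (c := v) hτ i hs.2), intervalIntegral.integral_comp_sub_right (v i)]
  simp

lemma gridGlue_eq_add_integral (hτ : 0 < τ) (hv : ∀ i, Continuous (v i))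
    (hcv : ∀ i, ∀ s ∈ Icc 0 τ, c i s = c i 0 + ∫ t in (0 : ℝ)..s, v i t)
    (hc : ∀ i, c i τ = c (i + 1) 0) (ht : 0 ≤ t) :
    gridGlue τ c t = c 0 0 + ∫ s in (0 : ℝ)..t, gridGlue τ v s := by
  have hsucc : ∀ i : ℕ, ((i + 1 : ℕ) : ℝ) * τ = i * τ + τ := fun i => by push_cast; ring
  have hτmem : τ ∈ Icc 0 τ := ⟨hτ.le, le_rfl⟩
  have hpieces : ∀ i : ℕ,
      IntervalIntegrable (gridGlue τ v) volume (i * τ) ((i + 1 : ℕ) * τ) := fun i => by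
    rw [hsucc]
    exact intervalIntegrable_gridGlue hτ hv i hτmem
  have hgrid : ∀ i : ℕ, ∫ s in (0 : ℝ)..(i * τ), gridGlue τ v s = c i 0 - c 0 0 := fun i => by
    have hsum := intervalIntegral.sum_integral_adjacent_intervals (n := i) fun j _ => hpieces j
    rw [Nat.cast_zero, zero_mul] at hsum
    rw [← hsum, ← Finset.sum_range_sub fun j => c j 0]
    refine Finset.sum_congr rfl fun j _ => ?_
    rw [hsucc, integral_gridGlue_piece hτ j hτmem, ← hc, hcv j τ hτmem, add_sub_cancel_left]
  have hprefix : ∀ i : ℕ, IntervalIntegrable (gridGlue τ v) volume 0 (i * τ) := fun i => by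
    simpa using IntervalIntegrable.trans_iterate fun j (_ : j < i) => hpieces j
  obtain ⟨i, s, hs, rfl⟩ := exists_eq_nat_mul_add hτ ht
  have hs' := Ico_subset_Icc_self hs
  rw [← intervalIntegral.integral_add_adjacent_intervals (hprefix i)
    (intervalIntegrable_gridGlue hτ hv i hs'), hgrid, integral_gridGlue_piece hτ i hs',
    gridGlue_nat_mul_add hτ i hs, hcv i s hs']
  abel

end Integral

end GridGlue

section SampleAndHold

variable {E V : Type*} [NormedAddCommGroup E] [NormedSpace ℝ E] [CompleteSpace E]
  [MeasurableSpace V] {f : E → V → E} {K : NNReal}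

lemma exists_sampleAndHold {κ : E → V} (hf : ∀ z, LipschitzWith K fun y => f y (κ z)) {τ : ℝ}
    (hτ : 0 < τ) (hKτ : K * τ < 1) (x : E) :
    ∃ (u : ℝ → V) (ξ : ℝ → E), Measurable u ∧ (∀ t, u t ∈ range κ) ∧ Continuous ξ ∧
      (∀ t, 0 ≤ t → ξ t = x + ∫ s in (0 : ℝ)..t, f (ξ s) (u s)) ∧
      ∀ i : ℕ, ∀ s ∈ Ico 0 τ, u (i * τ + s) = κ (ξ (i * τ)) := by
  choose η hηc hη using fun z => exists_integralCurve_of_lipschitzWith (hf z) hτ.le hKτ z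
  have hη0 : ∀ z, η z 0 = z := fun z => by simpa using hη z 0 ⟨le_rfl, hτ.le⟩
  set X : ℕ → E := fun i => (fun z => η z τ)^[i] x
  have hmatch : ∀ i, η (X i) τ = η (X (i + 1)) 0 := fun i => by
    rw [hη0]
    exact (Function.iterate_succ_apply' (fun z => η z τ) i x).symm
  have hnode : ∀ i : ℕ, gridGlue τ (fun i => η (X i)) (i * τ) = X i := fun i => by
    rw [gridGlue_nat_mul hτ, hη0]
  refine ⟨gridGlue τ fun i _ => κ (X i), gridGlue τ fun i => η (X i), ?_, fun t => ⟨_, rfl⟩,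
    continuous_gridGlue hτ (fun i => hηc _) hmatch, fun t ht => ?_, fun i s hs => ?_⟩
  · exact (measurable_from_nat (f := fun i => κ (X i))).comp
      (Nat.measurable_floor.comp (measurable_id.div_const τ))
  · have hpiece : ∀ i, ∀ s ∈ Icc 0 τ,
        η (X i) s = η (X i) 0 + ∫ r in (0 : ℝ)..s, f (η (X i) r) (κ (X i)) := fun i s hs => by
      rw [hη0]
      exact hη _ s hs
    have hglue := gridGlue_eq_add_integral hτ (fun i => (hf (X i)).continuous.comp (hηc (X i)))
      hpiece hmatch ht
    rwa [hη0] at hglue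
  · rw [gridGlue_nat_mul_add hτ i hs, hnode]

end SampleAndHold

section Trajectory

variable {n m : ℕ} {f : (Fin n → ℝ) → (Fin m → ℝ) → Fin n → ℝ} {U : Set (Fin m → ℝ)} {K : NNReal}
  {x : Fin n → ℝ} {u : ℝ → Fin m → ℝ} {ξ : ℝ → Fin n → ℝ}

lemma lipschitzWith_of_lipschitzOnWith_uncurry
    (hf : LipschitzOnWith K (Function.uncurry f) (univ ×ˢ U)) {v : Fin m → ℝ} (hv : v ∈ U) :
    LipschitzWith K fun y => f y v :=
  LipschitzWith.of_dist_le_mul fun y z => by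
    simpa [Prod.dist_eq] using hf.dist_le_mul (y, v) ⟨trivial, hv⟩ (z, v) ⟨trivial, hv⟩

lemma exists_norm_le_add_mul (hU : Bornology.IsBounded U)
    (hf : LipschitzOnWith K (Function.uncurry f) (univ ×ˢ U)) (x : Fin n → ℝ) :
    ∃ F, 0 ≤ F ∧ ∀ y, ∀ v ∈ U, ‖f y v‖ ≤ F + K * ‖y - x‖ := by
  have hfx : LipschitzOnWith K (f x) U := LipschitzOnWith.of_dist_le_mul fun v hv w hw => by
    simpa [Prod.dist_eq] using hf.dist_le_mul (x, v) ⟨trivial, hv⟩ (x, w) ⟨trivial, hw⟩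
  have hbdd := LipschitzOnWith.isBounded_image2 f (Bornology.isBounded_singleton (x := x)) hU
    (fun v hv => (lipschitzWith_of_lipschitzOnWith_uncurry hf hv).lipschitzOnWith)
    fun y hy => by rwa [mem_singleton_iff.1 hy]
  obtain ⟨F, hF, hbound⟩ := hbdd.exists_pos_norm_le
  refine ⟨F, hF.le, fun y v hv => ?_⟩
  calc ‖f y v‖ ≤ ‖f x v‖ + ‖f y v - f x v‖ := norm_le_norm_add_norm_sub' _ _
    _ ≤ F + K * ‖y - x‖ := add_le_add (hbound _ (mem_image2_of_mem rfl hv))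
      ((lipschitzWith_of_lipschitzOnWith_uncurry hf hv).norm_sub_le y x)

lemma IsControl.intervalIntegrable (hu : IsControl U u) (hU : Bornology.IsBounded U)
    (hf : LipschitzOnWith K (Function.uncurry f) (univ ×ˢ U)) (hξ : Continuous ξ) {a b : ℝ}
    (ha : 0 ≤ a) (hb : 0 ≤ b) : IntervalIntegrable (fun s => f (ξ s) (u s)) volume a b := by
  obtain ⟨F, -, hgrowth⟩ := exists_norm_le_add_mul hU hf 0
  obtain ⟨g, hg, hfg⟩ := hf.extend_pi
  have huU : ∀ᵐ s ∂volume.restrict (uIoc a b), u s ∈ U :=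
    (ae_restrict_mem measurableSet_uIoc).mono fun s hs => hu.2 s ((le_min ha hb).trans hs.1.le)
  have hmeas : Measurable fun s => g (ξ s, u s) :=
    hg.continuous.measurable.comp (hξ.measurable.prodMk hu.1)
  have hdom : Continuous fun s => F + K * ‖ξ s - 0‖ := by fun_prop
  refine (hdom.intervalIntegrable a b).mono_fun' ?_ (huU.mono fun s hs => hgrowth _ _ hs)
  exact hmeas.aestronglyMeasurable.congr
    (huU.mono fun s hs => (hfg (show (ξ s, u s) ∈ univ ×ˢ U from ⟨trivial, hs⟩)).symm)

namespace IsTrajectory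

lemma apply_zero (hξ : IsTrajectory f x u ξ) : ξ 0 = x := by simpa using hξ.2 0 le_rfl

lemma sub_eq_integral (hξ : IsTrajectory f x u ξ) (hu : IsControl U u)
    (hU : Bornology.IsBounded U) (hf : LipschitzOnWith K (Function.uncurry f) (univ ×ˢ U))
    {s t : ℝ} (hs : 0 ≤ s) (ht : 0 ≤ t) : ξ t - ξ s = ∫ r in s..t, f (ξ r) (u r) := by
  have hint : ∀ r, 0 ≤ r → IntervalIntegrable (fun r => f (ξ r) (u r)) volume 0 r :=
    fun r hr => hu.intervalIntegrable hU hf hξ.1 le_rfl hr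
  rw [hξ.2 t ht, hξ.2 s hs, add_sub_add_left_eq_sub,
    intervalIntegral.integral_interval_sub_left (hint t ht) (hint s hs)]

lemma exists_uniform_bound (hU : Bornology.IsBounded U)
    (hf : LipschitzOnWith K (Function.uncurry f) (univ ×ˢ U)) (x : Fin n → ℝ) (T : ℝ) :
    ∃ R C : ℝ, 0 ≤ C ∧ ∀ u ξ, IsControl U u → IsTrajectory f x u ξ → ∀ t ∈ Icc 0 T,
      ξ t ∈ Metric.closedBall x R ∧ ‖f (ξ t) (u t)‖ ≤ C := by
  obtain ⟨F, hF, hgrowth⟩ := exists_norm_le_add_mul hU hf x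
  set R := gronwallBound 0 K F T
  refine ⟨R, F + K * |R|, by positivity, fun u ξ hu hξ t ht => ?_⟩
  have hdist : ‖ξ t - x‖ ≤ R :=
    (norm_sub_le_gronwallBound K.2 hξ.1 hξ.2 (fun s hs => hgrowth _ _ (hu.2 s hs)) ht.1).trans
      (gronwallBound_mono le_rfl hF K.2 ht.2)
  refine ⟨mem_closedBall_iff_norm.2 hdist, (hgrowth _ _ (hu.2 t ht.1)).trans ?_⟩
  gcongr
  exact hdist.trans (le_abs_self R)

variable {s t C : ℝ}

lemma norm_sub_le (hξ : IsTrajectory f x u ξ) (hu : IsControl U u) (hU : Bornology.IsBounded U)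
    (hf : LipschitzOnWith K (Function.uncurry f) (univ ×ˢ U)) (hs : 0 ≤ s) (hst : s ≤ t)
    (hC : ∀ r ∈ Icc s t, ‖f (ξ r) (u r)‖ ≤ C) : ‖ξ t - ξ s‖ ≤ C * (t - s) := by
  rw [hξ.sub_eq_integral hu hU hf hs (hs.trans hst), ← abs_of_nonneg (sub_nonneg.2 hst)]
  refine intervalIntegral.norm_integral_le_of_norm_le_const fun r hr => ?_
  exact hC r (Ioc_subset_Icc_self (by rwa [uIoc_of_le hst] at hr))

lemma norm_sub_integral_le (hξ : IsTrajectory f x u ξ) (hu : IsControl U u)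
    (hU : Bornology.IsBounded U) (hf : LipschitzOnWith K (Function.uncurry f) (univ ×ˢ U))
    (hs : 0 ≤ s) (hst : s ≤ t) (hC0 : 0 ≤ C) (hC : ∀ r ∈ Icc s t, ‖f (ξ r) (u r)‖ ≤ C) :
    ‖ξ t - ξ s - ∫ r in s..t, f (ξ s) (u r)‖ ≤ K * C * (t - s) ^ 2 := by
  have ht := hs.trans hst
  rw [hξ.sub_eq_integral hu hU hf hs ht, ← intervalIntegral.integral_sub
    (hu.intervalIntegrable hU hf hξ.1 hs ht)
    (hu.intervalIntegrable hU hf continuous_const hs ht)]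
  have hbound : ∀ r ∈ uIoc s t,
      ‖f (ξ r) (u r) - f (ξ s) (u r)‖ ≤ K * C * (t - s) := fun r hr => by
    rw [uIoc_of_le hst] at hr
    have hdist : ‖ξ r - ξ s‖ ≤ C * (r - s) :=
      hξ.norm_sub_le hu hU hf hs hr.1.le fun q hq => hC q ⟨hq.1, hq.2.trans hr.2⟩
    calc ‖f (ξ r) (u r) - f (ξ s) (u r)‖ ≤ K * ‖ξ r - ξ s‖ :=
          (lipschitzWith_of_lipschitzOnWith_uncurry hf (hu.2 r (hs.trans hr.1.le))).norm_sub_le _ _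
      _ ≤ K * (C * (t - s)) := by
          gcongr
          exact hdist.trans (by gcongr; exact hr.2)
      _ = K * C * (t - s) := by ring
  refine (intervalIntegral.norm_integral_le_of_norm_le_const hbound).trans_eq ?_
  rw [abs_of_nonneg (sub_nonneg.2 hst)]
  ring

end IsTrajectory

lemma exists_isTrajectory_sampleAndHold
    (hf : LipschitzOnWith K (Function.uncurry f) (univ ×ˢ U)) {κ : (Fin n → ℝ) → Fin m → ℝ}
    (hκ : ∀ z, κ z ∈ U) {τ : ℝ} (hτ : 0 < τ) (hKτ : K * τ < 1) (x : Fin n → ℝ) :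
    ∃ u ξ, IsControl U u ∧ IsTrajectory f x u ξ ∧
      ∀ i : ℕ, ∀ s ∈ Ico 0 τ, u (i * τ + s) = κ (ξ (i * τ)) := by
  obtain ⟨u, ξ, hmeas, hrange, hcont, hint, hhold⟩ := exists_sampleAndHold
    (fun z => lipschitzWith_of_lipschitzOnWith_uncurry hf (hκ z)) hτ hKτ x
  exact ⟨u, ξ, ⟨hmeas, fun t _ => range_subset_iff.2 hκ (hrange t)⟩, ⟨hcont, hint⟩, hhold⟩

lemma exists_isTrajectory (hUne : U.Nonempty)
    (hf : LipschitzOnWith K (Function.uncurry f) (univ ×ˢ U)) (x : Fin n → ℝ) :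
    ∃ u ξ, IsControl U u ∧ IsTrajectory f x u ξ := by
  obtain ⟨τ, hτ, hKτ⟩ := exists_mem_Ioc_mul_lt_one K one_pos
  obtain ⟨u, ξ, hu, hξ, -⟩ :=
    exists_isTrajectory_sampleAndHold hf (fun _ => hUne.some_mem) hτ.1 hKτ x
  exact ⟨u, ξ, hu, hξ⟩

end Trajectory

section SupConvolution

variable {ι : Type*} [Fintype ι]

lemma abs_dotProduct_le_card_mul (a b : ι → ℝ) :
    |a ⬝ᵥ b| ≤ Fintype.card ι * (‖a‖ * ‖b‖) := calc
  |a ⬝ᵥ b| ≤ ∑ i, |a i * b i| := Finset.abs_sum_le_sum_abs _ _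
  _ ≤ ∑ _i : ι, ‖a‖ * ‖b‖ := Finset.sum_le_sum fun i _ => by
    rw [abs_mul]
    exact mul_le_mul (norm_le_pi_norm a i) (norm_le_pi_norm b i) (abs_nonneg _) (norm_nonneg _)
  _ = Fintype.card ι * (‖a‖ * ‖b‖) := by simp

lemma norm_sq_le_dotProduct_self (a : ι → ℝ) : ‖a‖ ^ 2 ≤ a ⬝ᵥ a := by
  have hnonneg : ∀ i ∈ Finset.univ, 0 ≤ a i * a i := fun i _ => mul_self_nonneg _
  refine (Real.le_sqrt (norm_nonneg a) (Finset.sum_nonneg hnonneg)).1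
    ((pi_norm_le_iff_of_nonneg (Real.sqrt_nonneg _)).2 fun i => Real.le_sqrt_of_sq_le ?_)
  rw [Real.norm_eq_abs, sq_abs, sq]
  exact Finset.single_le_sum hnonneg (Finset.mem_univ i)

lemma contDiff_const_mul_dotProduct_sub_self {k : WithTop ℕ∞} (c : ℝ) (y : ι → ℝ) :
    ContDiff ℝ k fun z => c * ((z - y) ⬝ᵥ (z - y)) := by
  simp only [dotProduct, Pi.sub_apply]
  fun_prop

lemma fderiv_const_mul_dotProduct_sub_self (c : ℝ) (y p a : ι → ℝ) :
    fderiv ℝ (fun z => c * ((z - y) ⬝ᵥ (z - y))) p a = 2 * c * ((p - y) ⬝ᵥ a) := by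
  have hcoord : ∀ i, HasFDerivAt (fun z : ι → ℝ => z i - y i)
      (ContinuousLinearMap.proj (R := ℝ) (φ := fun _ : ι => ℝ) i) p :=
    fun i => (hasFDerivAt_apply i p).sub_const _
  have hsum : HasFDerivAt (fun z : ι → ℝ => c * ∑ i, (z i - y i) * (z i - y i))
      (c • ∑ i, ((p i - y i) • ContinuousLinearMap.proj (R := ℝ) (φ := fun _ : ι => ℝ) i
        + (p i - y i) • ContinuousLinearMap.proj i)) p :=
    (HasFDerivAt.fun_sum fun i _ => (hcoord i).mul (hcoord i)).const_mul c
  simp only [dotProduct, Pi.sub_apply]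
  rw [hsum.fderiv]
  simp only [smul_apply, sum_apply, add_apply,
    ContinuousLinearMap.proj_apply, smul_eq_mul, Finset.mul_sum]
  exact Finset.sum_congr rfl fun i _ => by ring

/-- The objective `h z - c |z - y|²` that is maximised over `z` in the sup-convolution of `h` at
`y`. The squared Euclidean norm is a dot product because `ι → ℝ` carries the sup norm. -/
def proxObjective (c : ℝ) (h : (ι → ℝ) → ℝ) (y z : ι → ℝ) : ℝ := h z - c * ((z - y) ⬝ᵥ (z - y))

/-- The sup-convolution of `h` over `B` with quadratic penalty `c`, a semiconvex majorant of `h`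
on `B`. -/
def supConv (B : Set (ι → ℝ)) (c : ℝ) (h : (ι → ℝ) → ℝ) (y : ι → ℝ) : ℝ :=
  sSup (proxObjective c h y '' B)

variable {B : Set (ι → ℝ)} {c : ℝ} {h : (ι → ℝ) → ℝ} {y p : ι → ℝ}

lemma continuousOn_proxObjective (hh : ContinuousOn h B) : ContinuousOn (proxObjective c h y) B :=
  hh.sub (contDiff_const_mul_dotProduct_sub_self (k := 0) c y).continuous.continuousOn

lemma proxObjective_self : proxObjective c h y y = h y := by simp [proxObjective]

lemma supConv_eq_of_isMaxOn (hp : p ∈ B) (hmax : IsMaxOn (proxObjective c h y) B p) :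
    supConv B c h y = proxObjective c h y p :=
  IsGreatest.csSup_eq ⟨mem_image_of_mem _ hp, forall_mem_image.2 hmax⟩

lemma supConv_le_of_isMaxOn (hc : 0 ≤ c) (hp : p ∈ B) (hmax : IsMaxOn (proxObjective c h y) B p) :
    supConv B c h y ≤ h p := by
  rw [supConv_eq_of_isMaxOn hp hmax, proxObjective]
  have := (sq_nonneg _).trans (norm_sq_le_dotProduct_self (p - y))
  linarith [mul_nonneg hc this]

lemma proxObjective_le_supConv (hB : IsCompact B) (hh : ContinuousOn h B) (hp : p ∈ B) :
    proxObjective c h y p ≤ supConv B c h y :=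
  le_csSup (hB.bddAbove_image (continuousOn_proxObjective hh)) (mem_image_of_mem _ hp)

lemma le_supConv (hB : IsCompact B) (hh : ContinuousOn h B) (hy : y ∈ B) :
    h y ≤ supConv B c h y :=
  proxObjective_self.symm.trans_le (proxObjective_le_supConv hB hh hy)

lemma mul_norm_sq_le_of_isMaxOn (hc : 0 ≤ c) (hy : y ∈ B)
    (hmax : IsMaxOn (proxObjective c h y) B p) : c * ‖p - y‖ ^ 2 ≤ h p - h y := by
  have hle : h y ≤ proxObjective c h y p := proxObjective_self.symm.trans_le (hmax hy)
  rw [proxObjective] at hle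
  linarith [mul_le_mul_of_nonneg_left (norm_sq_le_dotProduct_self (p - y)) hc]

lemma exists_penalty_forall_isMaxOn (hB : IsCompact B) (hh : ContinuousOn h B) {ε : ℝ}
    (hε : 0 < ε) : ∃ c > 0, ∀ y ∈ B, ∀ p ∈ B, IsMaxOn (proxObjective c h y) B p →
      ‖p - y‖ < ε ∧ h p < h y + ε := by
  obtain ⟨ρ, hρ, hunif⟩ := Metric.uniformContinuousOn_iff.1
    (hB.uniformContinuousOn_of_continuous hh) ε hε
  obtain ⟨M, hM, hbound⟩ := (hB.image_of_continuousOn hh).isBounded.exists_pos_norm_le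
  have hmin : 0 < min ρ ε := lt_min hρ hε
  refine ⟨(2 * M + 1) / min ρ ε ^ 2, by positivity, fun y hy p hp hmax => ?_⟩
  have hosc : h p - h y < 2 * M + 1 := by
    linarith [abs_le.1 (hbound _ (mem_image_of_mem h hp)),
      abs_le.1 (hbound _ (mem_image_of_mem h hy))]
  have hdist : ‖p - y‖ < min ρ ε := by
    have hlt := (mul_norm_sq_le_of_isMaxOn (by positivity) hy hmax).trans_lt hosc
    rw [div_mul_eq_mul_div, div_lt_iff₀ (by positivity)] at hlt
    exact lt_of_pow_lt_pow_left₀ 2 hmin.le (lt_of_mul_lt_mul_left hlt (by positivity))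
  have hclose := hunif p hp y hy (by rw [dist_eq_norm]; exact hdist.trans_le (min_le_left _ _))
  exact ⟨hdist.trans_le (min_le_right _ _), by linarith [(abs_lt.1 hclose).2]⟩

lemma supConv_add_dotProduct_le (hB : IsCompact B) (hh : ContinuousOn h B) (hp : p ∈ B)
    (hmax : IsMaxOn (proxObjective c h y) B p) (d : ι → ℝ) :
    supConv B c h y + 2 * c * ((p - y) ⬝ᵥ d) - c * (d ⬝ᵥ d) ≤ supConv B c h (y + d) := by
  refine le_of_eq_of_le ?_ (proxObjective_le_supConv hB hh hp)
  rw [supConv_eq_of_isMaxOn hp hmax, proxObjective, proxObjective, ← sub_sub]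
  generalize p - y = q
  rw [sub_dotProduct, dotProduct_sub, dotProduct_sub, dotProduct_comm d q]
  ring

lemma supConv_add_mul_le_of_approx_velocity (hB : IsCompact B) (hh : ContinuousOn h B)
    (hc : 0 ≤ c) (hp : p ∈ B) (hmax : IsMaxOn (proxObjective c h y) B p) {a b w : ι → ℝ}
    {A C D K t ε : ℝ} (ht : 0 ≤ t) (hK : 0 ≤ K) (hA : A ≤ 2 * c * ((p - y) ⬝ᵥ a))
    (hab : ‖a - b‖ ≤ K * ‖p - y‖) (hpy : ‖p - y‖ ≤ 1) (hε : c * ‖p - y‖ ^ 2 ≤ ε)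
    (hw : ‖w - y‖ ≤ C * t) (hwb : ‖w - y - t • b‖ ≤ D * t ^ 2) :
    supConv B c h y + t * (A - 2 * Fintype.card ι * K * ε
      - c * Fintype.card ι * (2 * D + C ^ 2) * t) ≤ supConv B c h w := by
  set N : ℝ := (Fintype.card ι : ℝ)
  have hstep := supConv_add_dotProduct_le hB hh hp hmax (w - y)
  rw [add_sub_cancel] at hstep
  have hsplit : (p - y) ⬝ᵥ (w - y) = t * ((p - y) ⬝ᵥ a) - t * ((p - y) ⬝ᵥ (a - b))
      + (p - y) ⬝ᵥ (w - y - t • b) := by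
    simp only [dotProduct_sub, dotProduct_smul, smul_eq_mul]
    ring
  have hlip : c * ((p - y) ⬝ᵥ (a - b)) ≤ N * K * ε := calc
    c * ((p - y) ⬝ᵥ (a - b)) ≤ c * (N * (‖p - y‖ * (K * ‖p - y‖))) := by
      gcongr
      exact (le_abs_self _).trans ((abs_dotProduct_le_card_mul _ _).trans (by gcongr))
    _ = N * K * (c * ‖p - y‖ ^ 2) := by ring
    _ ≤ N * K * ε := by gcongr
  have herr : -(N * (D * t ^ 2)) ≤ (p - y) ⬝ᵥ (w - y - t • b) := by
    refine (abs_le.1 ((abs_dotProduct_le_card_mul _ _).trans ?_)).1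
    exact mul_le_mul_of_nonneg_left ((mul_le_of_le_one_left (norm_nonneg _) hpy).trans hwb)
      (Nat.cast_nonneg _)
  have hquad : (w - y) ⬝ᵥ (w - y) ≤ N * (C * t) ^ 2 := by
    rw [sq (C * t)]
    refine (le_abs_self _).trans ((abs_dotProduct_le_card_mul _ _).trans ?_)
    gcongr
    exact (norm_nonneg _).trans hw
  rw [hsplit] at hstep
  linarith [mul_le_mul_of_nonneg_left hA ht, mul_le_mul_of_nonneg_left hlip ht,
    mul_le_mul_of_nonneg_left herr hc, mul_le_mul_of_nonneg_left hquad hc]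

end SupConvolution

section Viability

variable {n m : ℕ} {f : (Fin n → ℝ) → (Fin m → ℝ) → Fin n → ℝ} {U : Set (Fin m → ℝ)} {K : NNReal}
  {α : ℝ → ℝ} {β : ℝ → ℝ → ℝ} {h : (Fin n → ℝ) → ℝ} {x : Fin n → ℝ}

namespace IsViscosityCBF

lemma exists_lt_dotProduct (hcbf : IsViscosityCBF f U α h) (hUne : U.Nonempty) {c ε : ℝ}
    (hε : 0 < ε) {B : Set (Fin n → ℝ)} {y p : Fin n → ℝ} (hp : 0 < h p) (hB : B ∈ 𝓝 p)
    (hmax : IsMaxOn (proxObjective c h y) B p) :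
    ∃ v ∈ U, -α (h p) - ε < 2 * c * ((p - y) ⬝ᵥ f p v) := by
  have hsup := hcbf.2 p hp _ (contDiff_const_mul_dotProduct_sub_self c y) (hmax.isLocalMax hB)
  obtain ⟨_, ⟨v, hv, rfl⟩, hlt⟩ := exists_lt_of_lt_csSup (hUne.image _)
    ((sub_lt_self _ hε).trans_le hsup)
  exact ⟨v, hv, hlt.trans_eq (fderiv_const_mul_dotProduct_sub_self c y p _)⟩

lemma exists_penalty_forall_exists_isMaxOn (hcbf : IsViscosityCBF f U α h) (hUne : U.Nonempty)
    {S : Set (Fin n → ℝ)} (hS : IsCompact S) {ε : ℝ} (hε : 0 < ε) :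
    ∃ c > 0, ∀ y ∈ S, ∃ p ∈ Metric.cthickening 1 S,
      IsMaxOn (proxObjective c h y) (Metric.cthickening 1 S) p ∧ ‖p - y‖ < 1 ∧ h p < h y + ε ∧
      ∃ v : U, 0 < h p → -α (h p) - ε < 2 * c * ((p - y) ⬝ᵥ f p v) := by
  have hB : IsCompact (Metric.cthickening 1 S) := hS.cthickening
  obtain ⟨c, hc, hpen⟩ := exists_penalty_forall_isMaxOn hB hcbf.1.continuousOn
    (lt_min one_pos hε)
  refine ⟨c, hc, fun y hy => ?_⟩
  have hyB : y ∈ Metric.cthickening 1 S := Metric.self_subset_cthickening S hy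
  obtain ⟨p, hp, hmax⟩ := hB.exists_isMaxOn ⟨y, hyB⟩
    (continuousOn_proxObjective (c := c) (y := y) hcbf.1.continuousOn)
  obtain ⟨hdist, hval⟩ := hpen y hyB p hp hmax
  have hpy : ‖p - y‖ < 1 := hdist.trans_le (min_le_left _ _)
  have hnhds : Metric.cthickening 1 S ∈ 𝓝 p := mem_of_superset
    (Metric.isOpen_thickening.mem_nhds
      (Metric.mem_thickening_iff.2 ⟨y, hy, by rwa [dist_eq_norm]⟩))
    (Metric.thickening_subset_cthickening 1 S)
  refine ⟨p, hp, hmax, hpy, hval.trans_le (by gcongr; exact min_le_right _ _), ?_⟩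
  by_cases hpos : 0 < h p
  · obtain ⟨v, hv, hlt⟩ := hcbf.exists_lt_dotProduct hUne hε hpos hnhds hmax
    exact ⟨⟨v, hv⟩, fun _ => hlt⟩
  · exact ⟨⟨_, hUne.some_mem⟩, fun hpos' => absurd hpos' hpos⟩

lemma exists_majorant_forall_add_mul_le (hcbf : IsViscosityCBF f U α h) (hUne : U.Nonempty)
    (hf : LipschitzOnWith K (Function.uncurry f) (univ ×ˢ U)) {S : Set (Fin n → ℝ)}
    (hS : IsCompact S) (C : ℝ) {ε : ℝ} (hε : 0 < ε) :
    ∃ V : (Fin n → ℝ) → ℝ, (∀ y ∈ S, V y ∈ Icc (h y) (h y + ε)) ∧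
      ∃ τ > 0, ∀ y ∈ S, ∃ s ∈ Icc (V y) (V y + ε), ∃ v : U, 0 < s → ∀ w, ∀ t ∈ Icc 0 τ,
        ‖w - y‖ ≤ C * t → ‖w - y - t • f y v‖ ≤ K * C * t ^ 2 →
        V y + t * (-α s - ε) ≤ V w := by
  set B := Metric.cthickening 1 S
  have hB : IsCompact B := hS.cthickening
  have hhB : ContinuousOn h B := hcbf.1.continuousOn
  have hle : ∀ c, ∀ y ∈ S, h y ≤ supConv B c h y := fun c y hy =>
    le_supConv hB hhB (Metric.self_subset_cthickening S hy)
  set δ := ε / (2 + 2 * n * K)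
  have hδ : 0 < δ := by positivity
  have hδε : 2 * δ + 2 * n * K * δ = ε := by rw [← add_mul, mul_div_cancel₀ _ (by positivity)]
  have hδ_le : δ ≤ ε := by linarith [show 0 ≤ 2 * n * K * δ by positivity]
  obtain ⟨c, hc, hprox⟩ := hcbf.exists_penalty_forall_exists_isMaxOn hUne hS hδ
  set Q := c * n * (2 * (K * C) + C ^ 2)
  refine ⟨supConv B c h, fun y hy => ⟨hle c y hy, ?_⟩, δ / (|Q| + 1), by positivity,
    fun y hy => ?_⟩ <;> obtain ⟨p, hp, hmax, hpy, hval, v, hv⟩ := hprox y hy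
  · linarith [supConv_le_of_isMaxOn hc.le hp hmax]
  refine ⟨h p, ⟨supConv_le_of_isMaxOn hc.le hp hmax, by linarith [hle c y hy]⟩, v,
    fun hpos w t ht hwy hwv => ?_⟩
  have hpen : c * ‖p - y‖ ^ 2 ≤ δ := by
    linarith [mul_norm_sq_le_of_isMaxOn hc.le (Metric.self_subset_cthickening S hy) hmax]
  have hgrowth := supConv_add_mul_le_of_approx_velocity hB hhB hc.le hp hmax ht.1 K.2
    (hv hpos).le ((lipschitzWith_of_lipschitzOnWith_uncurry hf v.2).norm_sub_le p y) hpy.le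
    hpen hwy hwv
  have hQ : Q * t ≤ δ := calc
    Q * t ≤ (|Q| + 1) * t := by gcongr; exacts [ht.1, (le_abs_self Q).trans (lt_add_one _).le]
    _ ≤ δ := by rw [mul_comm]; exact (le_div_iff₀ (by positivity)).1 ht.2
  have hrate : -α (h p) - ε ≤ -α (h p) - δ - 2 * n * K * δ - Q * t := by linarith
  rw [Fintype.card_fin] at hgrowth
  exact (add_le_add_right (mul_le_mul_of_nonneg_left hrate ht.1) _).trans hgrowth

lemma exists_majorant_forall_beta_sub_mul_le (hcbf : IsViscosityCBF f U α h) (hUne : U.Nonempty)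
    (hf : LipschitzOnWith K (Function.uncurry f) (univ ×ˢ U)) (hαc : ContinuousOn α (Ici 0))
    (hα : MonotoneOn α (Ici 0)) (hβ : IsBetaFor α β) (hh0 : ∀ y, 0 ≤ h y)
    {S : Set (Fin n → ℝ)} (hS : IsCompact S) (C : ℝ) {e : ℝ} (he : 0 < e) :
    ∃ V : (Fin n → ℝ) → ℝ, (∀ y ∈ S, V y ∈ Icc (h y) (h y + e)) ∧
      ∃ τ > 0, ∀ y ∈ S, ∃ v : U, ∀ w ∈ S, ∀ t ∈ Icc 0 τ, ‖w - y‖ ≤ C * t →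
        ‖w - y - t • f y v‖ ≤ K * C * t ^ 2 → β (V y) t - e * t ≤ V w := by
  obtain ⟨M, hM, hbound⟩ := (hS.image hcbf.1).isBounded.exists_pos_norm_le
  obtain ⟨τ, hτ, hflow⟩ := hβ.exists_forall_le_sub_mul hαc hα (M := M + 2) (by positivity)
    (half_pos he)
  set ε := min (e / 2) (min τ 1)
  have hε : 0 < ε := by positivity
  have hε_half : ε ≤ e / 2 := min_le_left _ _
  have hε_tau : ε ≤ τ := (min_le_right _ _).trans (min_le_left _ _)
  have hε_one : ε ≤ 1 := (min_le_right _ _).trans (min_le_right _ _)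
  obtain ⟨V, hV, τ', hτ', hstep⟩ := hcbf.exists_majorant_forall_add_mul_le hUne hf hS C hε
  have hV0 : ∀ y ∈ S, 0 ≤ V y := fun y hy => (hh0 y).trans (hV y hy).1
  refine ⟨V, fun y hy => ⟨(hV y hy).1, by linarith [(hV y hy).2]⟩, min τ τ', by positivity,
    fun y hy => ?_⟩
  obtain ⟨s, hs, v, hv⟩ := hstep y hy
  refine ⟨v, fun w hw t ht hwy hwv => ?_⟩
  rcases ((hV0 y hy).trans hs.1).eq_or_lt with rfl | hpos
  · rw [le_antisymm hs.1 (hV0 y hy), hβ.zero_apply ht.1]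
    linarith [mul_nonneg he.le ht.1, hV0 w hw]
  have hyM : h y ≤ M := (le_abs_self _).trans (hbound _ (mem_image_of_mem h hy))
  have hdecay := hflow (V y) ⟨hV0 y hy, by linarith [(hV y hy).2]⟩ s
    ⟨hpos.le, by linarith [(hV y hy).2, hs.2]⟩ (by linarith [hs.2]) t
    ⟨ht.1, ht.2.trans (min_le_left _ _)⟩
  have hgrowth := hv hpos w t ⟨ht.1, ht.2.trans (min_le_right _ _)⟩ hwy hwv
  linarith [mul_le_mul_of_nonneg_left hε_half ht.1]

end IsViscosityCBF

namespace IsTrajectory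

variable {u : ℝ → Fin m → ℝ} {ξ : ℝ → Fin n → ℝ} {s t C : ℝ}

lemma norm_sub_smul_le_of_forall_Ico_eq (hξ : IsTrajectory f x u ξ) (hu : IsControl U u)
    (hU : Bornology.IsBounded U) (hf : LipschitzOnWith K (Function.uncurry f) (univ ×ˢ U))
    (hs : 0 ≤ s) (hst : s ≤ t) (hC0 : 0 ≤ C) (hC : ∀ r ∈ Icc s t, ‖f (ξ r) (u r)‖ ≤ C)
    {v : Fin m → ℝ} (hv : ∀ r ∈ Ico s t, u r = v) :
    ‖ξ t - ξ s - (t - s) • f (ξ s) v‖ ≤ K * C * (t - s) ^ 2 := by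
  have hint : ∫ r in s..t, f (ξ s) (u r) = (t - s) • f (ξ s) v := by
    rw [← intervalIntegral.integral_const]
    refine intervalIntegral.integral_congr_Ioo_of_le hst fun r hr => ?_
    simp only [hv r (Ioo_subset_Ico_self hr)]
  rw [← hint]
  exact hξ.norm_sub_integral_le hu hU hf hs hst hC0 hC

lemma clm_apply_sub_le (hξ : IsTrajectory f x u ξ) (hu : IsControl U u)
    (hU : Bornology.IsBounded U) (hf : LipschitzOnWith K (Function.uncurry f) (univ ×ˢ U))
    (ht : 0 ≤ t) (hC0 : 0 ≤ C) (hC : ∀ r ∈ Icc 0 t, ‖f (ξ r) (u r)‖ ≤ C)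
    (L : (Fin n → ℝ) →L[ℝ] ℝ) :
    L (ξ t - x) ≤ t * sSup ((fun v => L (f x v)) '' U) + ‖L‖ * (K * C * t ^ 2) := by
  obtain ⟨F, -, hgrowth⟩ := exists_norm_le_add_mul hU hf x
  have hbdd : BddAbove ((fun v => L (f x v)) '' U) := by
    refine ⟨‖L‖ * F, forall_mem_image.2 fun v hv => ?_⟩
    refine (le_abs_self _).trans ((L.le_opNorm _).trans ?_)
    gcongr
    simpa using hgrowth x v hv
  have hint := hu.intervalIntegrable hU hf (continuous_const (y := x)) le_rfl ht
  have hmain : L (∫ r in (0 : ℝ)..t, f x (u r)) ≤ t * sSup ((fun v => L (f x v)) '' U) := by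
    rw [← L.intervalIntegral_comp_comm hint]
    refine (intervalIntegral.integral_mono_on ht
      ⟨L.integrable_comp hint.1, L.integrable_comp hint.2⟩ intervalIntegrable_const
      fun r hr => le_csSup hbdd (mem_image_of_mem _ (hu.2 r hr.1))).trans_eq ?_
    simp
  have herr := hξ.norm_sub_integral_le hu hU hf le_rfl ht hC0 hC
  rw [hξ.apply_zero, sub_zero] at herr
  calc L (ξ t - x) = L (∫ r in (0 : ℝ)..t, f x (u r))
        + L (ξ t - x - ∫ r in (0 : ℝ)..t, f x (u r)) := by rw [← map_add]; congr 1; abel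
    _ ≤ _ := add_le_add hmain ((le_abs_self _).trans ((L.le_opNorm _).trans (by gcongr)))

end IsTrajectory

lemma IsViscosityCBF.exists_trajectory (hcbf : IsViscosityCBF f U α h)
    (hU : Bornology.IsBounded U) (hUne : U.Nonempty)
    (hf : LipschitzOnWith K (Function.uncurry f) (univ ×ˢ U)) (hαc : ContinuousOn α (Ici 0))
    (hα : MonotoneOn α (Ici 0)) (hβ : IsBetaFor α β) (hh0 : ∀ y, 0 ≤ h y) (x : Fin n → ℝ)
    {T e : ℝ} (hT : 0 ≤ T) (he : 0 < e) :
    ∃ u ξ, IsControl U u ∧ IsTrajectory f x u ξ ∧ ∀ t ∈ Icc 0 T, β (h x) t - e ≤ h (ξ t) := by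
  obtain ⟨R, C, hC, hreach⟩ := IsTrajectory.exists_uniform_bound hU hf x T
  obtain ⟨V, hV, τ₀, hτ₀, hstep⟩ := hcbf.exists_majorant_forall_beta_sub_mul_le hUne hf hαc
    hα hβ hh0 (isCompact_closedBall x R) C (e := e / (T + 1)) (by positivity)
  have : Nonempty U := hUne.to_subtype
  choose! κ hκ using hstep
  obtain ⟨τ, ⟨hτ, hττ₀⟩, hKτ⟩ := exists_mem_Ioc_mul_lt_one K hτ₀
  obtain ⟨u, ξ, hu, hξ, hhold⟩ := exists_isTrajectory_sampleAndHold hf (fun z => (κ z).2) hτ hKτ x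
  have hball : ∀ t ∈ Icc 0 T, ξ t ∈ Metric.closedBall x R := fun t ht => (hreach u ξ hu hξ t ht).1
  have hgrid : ∀ i : ℕ, ∀ t ∈ Icc 0 τ, i * τ + t ≤ T →
      β (V (ξ (i * τ))) t - e / (T + 1) * t ≤ V (ξ (i * τ + t)) := fun i t ht hiT => by
    have hiτ : 0 ≤ i * τ := by positivity
    have hle : i * τ ≤ i * τ + t := le_add_of_nonneg_right ht.1
    have hspeed : ∀ r ∈ Icc (i * τ) (i * τ + t), ‖f (ξ r) (u r)‖ ≤ C := fun r hr =>
      (hreach u ξ hu hξ r ⟨hiτ.trans hr.1, hr.2.trans hiT⟩).2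
    have hconst : ∀ r ∈ Ico (i * τ) (i * τ + t), u r = κ (ξ (i * τ)) := fun r hr => by
      simpa using hhold i (r - i * τ) ⟨by linarith [hr.1], by linarith [hr.2, ht.2]⟩
    have hmove := hξ.norm_sub_le hu hU hf hiτ hle hspeed
    have hfollow := hξ.norm_sub_smul_le_of_forall_Ico_eq hu hU hf hiτ hle hC hspeed hconst
    rw [add_sub_cancel_left] at hmove hfollow
    exact hκ _ (hball _ ⟨hiτ, hle.trans hiT⟩) _ (hball _ ⟨hiτ.trans hle, hiT⟩) t
      ⟨ht.1, ht.2.trans hττ₀⟩ hmove hfollow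
  refine ⟨u, ξ, hu, hξ, fun t ht => ?_⟩
  have hlower := hβ.sub_mul_le_of_forall_grid hα hτ (by positivity)
    (fun t ht => (hh0 _).trans (hV _ (hball t ht)).1) hgrid ht
  have hVx := (hV _ (hball 0 ⟨le_rfl, hT⟩)).1
  rw [hξ.apply_zero] at hVx hlower
  have hstart := hβ.le_add hα (hh0 x) ((hh0 x).trans hVx) le_rfl (by simpa using hVx) ht.1
  have hbudget : e / (T + 1) * t + e / (T + 1) ≤ e := by
    rw [← mul_add_one, div_mul_eq_mul_div, div_le_iff₀ (by positivity)]
    gcongr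
    exact ht.2
  linarith [(hV _ (hball t ht)).2]

lemma eq_cbvfPayoff_iff (hβ : IsBetaFor α β) (hh0 : ∀ y, 0 ≤ h y)
    (hne : ∃ u ξ, IsControl U u ∧ IsTrajectory f x u ξ) {T : ℝ} (hT : 0 ≤ T) :
    β (h x) T = cbvfPayoff f U β h x T ↔ ∀ e > 0, ∃ u ξ, IsControl U u ∧ IsTrajectory f x u ξ ∧
      ∀ t ∈ Icc 0 T, β (h x) T - e ≤ β (h (ξ t)) (T - t) := by
  have hbdd : ∀ ξ : ℝ → Fin n → ℝ, BddBelow ((fun t => β (h (ξ t)) (T - t)) '' Icc 0 T) :=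
    fun ξ => ⟨0, forall_mem_image.2 fun t ht => hβ.nonneg (hh0 _) (sub_nonneg.2 ht.2)⟩
  set payoffs : Set ℝ := {y | ∃ u ξ, IsControl U u ∧ IsTrajectory f x u ξ ∧
    y = sInf ((fun t => β (h (ξ t)) (T - t)) '' Icc 0 T)}
  have hupper : ∀ y ∈ payoffs, y ≤ β (h x) T := by
    rintro _ ⟨u, ξ, -, hξ, rfl⟩
    simpa [hξ.apply_zero] using csInf_le (hbdd ξ) ⟨0, left_mem_Icc.2 hT, rfl⟩
  have hpayoffs : payoffs.Nonempty := by
    obtain ⟨u, ξ, hu, hξ⟩ := hne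
    exact ⟨_, u, ξ, hu, hξ, rfl⟩
  constructor
  · intro heq e he
    obtain ⟨_, ⟨u, ξ, hu, hξ, rfl⟩, hlt⟩ := exists_lt_of_lt_csSup hpayoffs
      ((sub_lt_self _ he).trans_eq heq)
    exact ⟨u, ξ, hu, hξ, fun t ht => hlt.le.trans (csInf_le (hbdd ξ) ⟨t, ht, rfl⟩)⟩
  · intro happrox
    refine le_antisymm (le_of_forall_pos_sub_le fun e he => ?_) (csSup_le hpayoffs hupper)
    obtain ⟨u, ξ, hu, hξ, hle⟩ := happrox e he
    exact (le_csInf ((nonempty_Icc.2 hT).image _) (forall_mem_image.2 hle)).trans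
      (le_csSup ⟨_, hupper⟩ ⟨u, ξ, hu, hξ, rfl⟩)

lemma tendsto_hasFDerivAt_remainder_div {E : Type*} [NormedAddCommGroup E] [NormedSpace ℝ E]
    {φ : E → ℝ} {L : E →L[ℝ] ℝ} {x : E} (hφ : HasFDerivAt φ L x) {l : Filter ℝ} {z : ℝ → E}
    (hz : Tendsto z l (𝓝 x)) (hzO : (fun t => z t - x) =O[l] fun t => t) :
    Tendsto (fun t => (φ (z t) - φ x - L (z t - x)) / t) l (𝓝 0) :=
  ((hφ.isLittleO.comp_tendsto hz).trans_isBigO hzO).tendsto_div_nhds_zero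

lemma isViscosityCBF_of_forall_exists_trajectory (hU : Bornology.IsBounded U)
    (hf : LipschitzOnWith K (Function.uncurry f) (univ ×ˢ U)) (hβ : IsBetaFor α β)
    (hh : Continuous h) (hh0 : ∀ y, 0 ≤ h y)
    (htraj : ∀ x, ∀ T > 0, ∀ e > 0, ∃ u ξ, IsControl U u ∧ IsTrajectory f x u ξ ∧
      β (h x) T - e ≤ h (ξ T)) : IsViscosityCBF f U α h := by
  refine ⟨hh, fun x _ φ hφ hmax => ?_⟩
  set L := fderiv ℝ φ x
  set σ := sSup ((fun v => L (f x v)) '' U)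
  obtain ⟨R, C, hC, hreach⟩ := IsTrajectory.exists_uniform_bound hU hf x 1
  choose! u ξ hu hξ hlower using fun T (hT : 0 < T) => htraj x T hT (T ^ 2) (pow_pos hT 2)
  have hspeed : ∀ T ∈ Ioo (0 : ℝ) 1, ∀ r ∈ Icc 0 T, ‖f (ξ T r) (u T r)‖ ≤ C := fun T hT r hr =>
    (hreach _ _ (hu T hT.1) (hξ T hT.1) r ⟨hr.1, hr.2.trans hT.2.le⟩).2
  have hsmall : ∀ᶠ T in 𝓝[>] (0 : ℝ), T ∈ Ioo (0 : ℝ) 1 := Ioo_mem_nhdsGT one_pos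
  have hendO : (fun T => ξ T T - x) =O[𝓝[>] 0] fun T => T :=
    Asymptotics.IsBigO.of_bound C <| hsmall.mono fun T hT => by
      simpa [(hξ T hT.1).apply_zero, abs_of_pos hT.1] using
        (hξ T hT.1).norm_sub_le (hu T hT.1) hU hf le_rfl hT.1.le (hspeed T hT)
  have hid : Tendsto (fun T : ℝ => T) (𝓝[>] 0) (𝓝 0) := nhdsWithin_le_nhds
  have hend : Tendsto (fun T => ξ T T) (𝓝[>] 0) (𝓝 x) :=
    tendsto_sub_nhds_zero_iff.1 (hendO.trans_tendsto hid)
  have hremainder := tendsto_hasFDerivAt_remainder_div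
    (hφ.differentiable one_ne_zero x).hasFDerivAt hend hendO
  have hupper : Tendsto (fun T => σ + (‖L‖ * (K * C) + 1) * T
      + (φ (ξ T T) - φ x - L (ξ T T - x)) / T) (𝓝[>] 0) (𝓝 σ) := by
    simpa using ((hid.const_mul (‖L‖ * (K * C) + 1)).const_add σ).add hremainder
  refine le_of_tendsto_of_tendsto (hβ.tendsto_sub_div (hh0 x)) hupper ?_
  filter_upwards [hsmall, hend.eventually hmax] with T hT hmaxT
  have hmove := (hξ T hT.1).clm_apply_sub_le (hu T hT.1) hU hf hT.1.le hC (hspeed T hT) L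
  rw [div_le_iff₀ hT.1, add_mul, div_mul_cancel₀ _ hT.1.ne']
  linarith [hlower T hT.1]

theorem isViscosityCBF_iff_cbvf_time_invariant_general (hU : Bornology.IsBounded U)
    (hUne : U.Nonempty) (hf : LipschitzOnWith K (Function.uncurry f) (univ ×ˢ U))
    (hαc : ContinuousOn α (Ici 0)) (hα : MonotoneOn α (Ici 0)) (hβ : IsBetaFor α β)
    (hh : Continuous h) (hh0 : ∀ x, 0 ≤ h x) :
    IsViscosityCBF f U α h ↔
      ∀ x : Fin n → ℝ, ∀ T : ℝ, 0 ≤ T → β (h x) T = cbvfPayoff f U β h x T := by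
  have hne := exists_isTrajectory hUne hf
  constructor
  · intro hcbf x T hT
    refine (eq_cbvfPayoff_iff hβ hh0 (hne x) hT).2 fun e he => ?_
    obtain ⟨u, ξ, hu, hξ, hle⟩ := hcbf.exists_trajectory hU hUne hf hαc hα hβ hh0 x hT he
    refine ⟨u, ξ, hu, hξ, fun t ht => ?_⟩
    have hdecay := hβ.le_add hα (hβ.nonneg (hh0 x) ht.1) (hh0 (ξ t)) he.le
      (sub_le_iff_le_add.1 (hle t ht)) (sub_nonneg.2 ht.2)
    rw [hβ.apply_apply hα (hh0 x) ht.1 (sub_nonneg.2 ht.2), add_sub_cancel] at hdecay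
    exact sub_le_iff_le_add.2 hdecay
  · intro hinv
    refine isViscosityCBF_of_forall_exists_trajectory hU hf hβ hh hh0 fun x T hT e he => ?_
    obtain ⟨u, ξ, hu, hξ, hle⟩ := (eq_cbvfPayoff_iff hβ hh0 (hne x) hT.le).1 (hinv x T hT.le) e he
    exact ⟨u, ξ, hu, hξ, by simpa [hβ.apply_zero (hh0 _)] using hle T ⟨hT.le, le_rfl⟩⟩

end Viability

/-- A continuous nonnegative `h` is a viscosity CBF w.r.t. `α` iff the CB-VF
corresponding to `h` and `α` is time-invariant, i.e.
`β_α (h x) T = sup_{(u,ξ)} min_{t ∈ [0,T]} β_α (h (ξ t)) (T - t)` for all `x` and `T ≥ 0`. -/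
theorem isViscosityCBF_iff_cbvf_time_invariant {n m : ℕ}
    (f : (Fin n → ℝ) → (Fin m → ℝ) → Fin n → ℝ) (U : Set (Fin m → ℝ))
    (hU : IsCompact U) (hUne : U.Nonempty)
    (hf : ∃ K : NNReal, LipschitzOnWith K (Function.uncurry f) (Set.univ ×ˢ U))
    (α : ℝ → ℝ) (hα : IsLocallyLipschitzClassK α)
    (β : ℝ → ℝ → ℝ) (hβ : IsBetaFor α β)
    (h : (Fin n → ℝ) → ℝ) (hh : Continuous h) (hh0 : ∀ x, 0 ≤ h x) :
    IsViscosityCBF f U α h ↔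
      ∀ x : Fin n → ℝ, ∀ T : ℝ, 0 ≤ T → β (h x) T = cbvfPayoff f U β h x T := by
  obtain ⟨K, hK⟩ := hf
  exact isViscosityCBF_iff_cbvf_time_invariant_general hU.isBounded hUne hK hα.1.1
    hα.1.2.1.monotoneOn hβ hh hh0
end
end
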